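/- Let R be a basic left Harada algebra with modules P_{ij} := rad^{j-1}(e_{i1}R) as below, and let 1 ≤ i, u ≤ m with i ≠ u. Then Ext^1_R(P_{ik}/P_{il}, P_{uv}) = 0 for all 1 ≤ k < l ≤ n_i and all 1 ≤ v ≤ n_u, and Ext^1_R(P_{ik}/P_{il}, P_{us}/P_{ut}) = 0 for all 1 ≤ k < l ≤ n_i and all 1 ≤ s < t ≤ n_u. -/

import Mathlib

/-!
Common setup.  `K` is an algebraically closed field and `R` a finite-dimensional associative
unital `K`-algebra.  Right `R`-modules are formalized as modules over the opposite ring `Rᵐᵒᵖ`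
(so that `MulOpposite.op r • x = x * r`).
-/

open MulOpposite

/-- The right ideal `xR` of a ring `R`, as a submodule of `R` over `Rᵐᵒᵖ`. -/
def rightIdeal (R : Type) [Ring R] (x : R) : Submodule Rᵐᵒᵖ R :=
  Submodule.span Rᵐᵒᵖ {x}

/-- The Jacobson radical of a submodule `N` (the intersection of the maximal submodules of the
module `N`), viewed as a submodule of the ambient module.  Iterating this operation gives the
iterated radicals `rad^k`. -/
def radSub {A M : Type} [Ring A] [AddCommGroup M] [Module A M] (N : Submodule A M) :
    Submodule A M :=
  Submodule.map N.subtype (sInf {P : Submodule A ↥N | IsCoatom P})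

/-- A module is indecomposable if it is nonzero and admits no nontrivial direct sum
decomposition. -/
def IsIndecomposableMod (A M : Type) [Ring A] [AddCommGroup M] [Module A M] : Prop :=
  Nontrivial M ∧ ∀ N N' : Submodule A M, IsCompl N N' → N = ⊥ ∨ N' = ⊥

/-- A module has projective dimension at most one iff it admits a surjection from a projective
module with projective kernel. -/
def PdLeOne (A : Type) [Ring A] (M : Type) [AddCommGroup M] [Module A M] : Prop :=
  ∃ (P : ModuleCat.{0} A) (f : ↥P →ₗ[A] M),
    Module.Projective A ↥P ∧ Function.Surjective f ∧
      Module.Projective A ↥(LinearMap.ker f)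

/-- `Ext¹_A(M,N) = 0`, expressed by the splitting of every short exact sequence
`0 → N → E → M → 0`. -/
def Ext1Zero (A : Type) [Ring A] (M N : Type) [AddCommGroup M] [Module A M]
    [AddCommGroup N] [Module A N] : Prop :=
  ∀ (E : ModuleCat.{0} A) (i : N →ₗ[A] ↥E) (p : ↥E →ₗ[A] M),
    Function.Injective i → Function.Surjective p → LinearMap.range i = LinearMap.ker p →
    ∃ s : M →ₗ[A] ↥E, p.comp s = LinearMap.id

/-- `X ∈ add T` : `X` is a direct summand of a finite direct sum of copies of `T`. -/
def InAdd (A : Type) [Ring A] (T X : Type) [AddCommGroup T] [Module A T]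
    [AddCommGroup X] [Module A X] : Prop :=
  ∃ (k : ℕ) (f : X →ₗ[A] (Fin k → T)) (g : (Fin k → T) →ₗ[A] X),
    g.comp f = LinearMap.id

/-- `T` is a (finitely generated) tilting right `R`-module: projective dimension at most one,
no self-extensions, and there is a short exact sequence `0 → R → T₀ → T₁ → 0` with
`T₀, T₁ ∈ add T`. -/
def IsTiltingRight (R : Type) [Ring R] (T : Type) [AddCommGroup T] [Module Rᵐᵒᵖ T] : Prop :=
  Module.Finite Rᵐᵒᵖ T ∧ PdLeOne Rᵐᵒᵖ T ∧ Ext1Zero Rᵐᵒᵖ T T ∧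
    ∃ (T₀ T₁ : ModuleCat.{0} Rᵐᵒᵖ) (f : R →ₗ[Rᵐᵒᵖ] ↥T₀) (g : ↥T₀ →ₗ[Rᵐᵒᵖ] ↥T₁),
      InAdd Rᵐᵒᵖ T ↥T₀ ∧ InAdd Rᵐᵒᵖ T ↥T₁ ∧
        Function.Injective f ∧ Function.Surjective g ∧ LinearMap.range f = LinearMap.ker g

/-- `T` is basic: it is an (internal) direct sum of pairwise non-isomorphic indecomposable
submodules. -/
def IsBasicMod (A : Type) [Ring A] (T : Type) [AddCommGroup T] [Module A T] : Prop :=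
  ∃ (k : ℕ) (N : Fin k → Submodule A T),
    DirectSum.IsInternal N ∧ (∀ a, IsIndecomposableMod A ↥(N a)) ∧
      ∀ a b, a ≠ b → IsEmpty (↥(N a) ≃ₗ[A] ↥(N b))

/-- The setoid identifying isomorphic modules (among those with property `P`). -/
def isoSetoid (A : Type) [Ring A] (P : ModuleCat.{0} A → Prop) :
    Setoid {M : ModuleCat.{0} A // P M} where
  r M N := Nonempty (↥M.1 ≃ₗ[A] ↥N.1)
  iseqv := ⟨fun M => ⟨LinearEquiv.refl A ↥M.1⟩, fun ⟨e⟩ => ⟨e.symm⟩,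
    fun ⟨e⟩ ⟨f⟩ => ⟨e.trans f⟩⟩

/-- The data exhibiting a ring `R` as a basic left Harada algebra:
a complete set `{e i j}` of orthogonal primitive idempotents with pairwise non-isomorphic
right ideals `(e i j)R` (`R` is basic), such that each `(e i 0)R` is an injective right
module, and `(e i j)R ≅ rad ((e i (j-1))R)` for `j ≥ 1`.  (Indices are shifted by one from
the paper: the paper's `e_{ij}` is `e i (j-1)` here.) -/
structure HaradaData (R : Type) [Ring R] : Type where
  m : ℕ
  hm : 0 < m
  n : Fin m → ℕ
  hn : ∀ i, 0 < n i
  e : (i : Fin m) → Fin (n i) → R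
  idem : ∀ i j, IsIdempotentElem (e i j)
  orth : ∀ p q : Σ i : Fin m, Fin (n i), p ≠ q → e p.1 p.2 * e q.1 q.2 = 0
  sum_eq_one : ∑ p : Σ i : Fin m, Fin (n i), e p.1 p.2 = 1
  indec : ∀ i j, IsIndecomposableMod Rᵐᵒᵖ ↥(rightIdeal R (e i j))
  basic : ∀ p q : Σ i : Fin m, Fin (n i), p ≠ q →
    IsEmpty (↥(rightIdeal R (e p.1 p.2)) ≃ₗ[Rᵐᵒᵖ] ↥(rightIdeal R (e q.1 q.2)))
  inj : ∀ i, Module.Injective Rᵐᵒᵖ ↥(rightIdeal R (e i ⟨0, hn i⟩))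
  rad_iso : ∀ (i : Fin m) (j : Fin (n i)), 0 < j.val →
    Nonempty (↥(rightIdeal R (e i j)) ≃ₗ[Rᵐᵒᵖ]
      ↥(radSub (rightIdeal R (e i ⟨j.val - 1, Nat.lt_of_le_of_lt (Nat.sub_le j.val 1) j.isLt⟩))))

variable {R : Type} [Ring R]

/-- `H.P i j = rad^j ((e i 0)R)`; this is the paper's `P_{i,j+1} = rad^j (e_{i1}R)`,
a submodule of `R`. -/
def HaradaData.P (H : HaradaData R) (i : Fin H.m) (j : Fin (H.n i)) : Submodule Rᵐᵒᵖ R :=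
  radSub^[j.val] (rightIdeal R (H.e i ⟨0, H.hn i⟩))

/-- The quotient module `P_{ik}/P_{il}` (for `l ≥ k` we have `H.P i l ≤ H.P i k`). -/
abbrev HaradaData.Quot (H : HaradaData R) (i : Fin H.m) (k l : Fin (H.n i)) : Type :=
  ↥(H.P i k) ⧸ Submodule.comap (H.P i k).subtype (H.P i l)

/-- The last index (the paper's `n_i`) in `Fin (H.n i)`. -/
def HaradaData.last (H : HaradaData R) (i : Fin H.m) : Fin (H.n i) :=
  ⟨H.n i - 1, Nat.sub_lt (H.hn i) one_pos⟩

/-- The right ideal `I = ⊕_{i,j} rad^{n_i - j + 1}(e_{ij}R)` of the paper. -/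
def HaradaData.I (H : HaradaData R) : Submodule Rᵐᵒᵖ R :=
  ⨆ p : Σ i : Fin H.m, Fin (H.n i),
    radSub^[H.n p.1 - p.2.val] (rightIdeal R (H.e p.1 p.2))

/-- The submodule `T·I` of a right module `T`, for `I` a right ideal of `R`. -/
def smulSub (I : Submodule Rᵐᵒᵖ R) (T : Type) [AddCommGroup T] [Module Rᵐᵒᵖ T] :
    Submodule Rᵐᵒᵖ T :=
  Submodule.span Rᵐᵒᵖ {x : T | ∃ (t : T) (r : R), r ∈ I ∧ x = op r • t}

/-!
Let `f : B → P_{uv}` be defined on a submodule `B` of `P_{ik}`. Injectivity of `P_{u1}` extends it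
to `g : P_{ik} → P_{u1}`, and everything rests on showing that the image of `g` already lies in
`P_{uv}`. Descend along the chain: an image inside `P_{uj}` is a proper submodule, since otherwise
the indecomposable `P_{ik}` would split onto the projective `P_{uj}`, and `P_{uj}` is local, so the
image lies in `rad(P_{uj}) = P_{u,j+1}`. Thus every `f` extends to `P_{ik}`, which is
`Ext¹(P_{ik}/B, P_{uv}) = 0` because `P_{ik}` is projective. If `B` is projective as well, maps from
`B` to a quotient of `P_{us}` lift to `P_{us}` and hence extend too.

The endomorphism ring of `P_{uj}` is local: `P_{u1}` is an indecomposable injective, hence uniform,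
so of two endomorphisms of `P_{uj}` with sum `1` one is injective. It extends to an injective, hence
bijective, endomorphism of `P_{u1}`, which restricts to an automorphism of
`rad^{j-1}(P_{u1}) = P_{uj}`.
-/

section Lattice

theorem exists_ge_maximal_disjoint {α : Type*} [CompleteLattice α] [IsCompactlyGenerated α]
    {a b : α} (hab : Disjoint a b) : ∃ c, b ≤ c ∧ Maximal (Disjoint a) c := by
  refine zorn_le_nonempty₀ {c | Disjoint a c} (fun s hs hchain _ _ => ⟨sSup s, ?_, ?_⟩) b hab
  · exact hchain.directedOn.disjoint_sSup_right.2 hs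
  · exact fun _ => le_sSup

end Lattice

section Module

universe v

variable {A : Type*} {M : Type v} [Ring A] [AddCommGroup M] [Module A M]

theorem exists_end_eq_id_and_eq_zero_of_disjoint [Small.{v} A] [Module.Injective A M]
    {X Y : Submodule A M} (hXY : Disjoint X Y) :
    ∃ f : Module.End A M, (∀ x ∈ X, f x = x) ∧ ∀ y ∈ Y, f y = 0 := by
  have hinj : Function.Injective (X.subtype.coprod Y.subtype) := by
    rw [← LinearMap.ker_eq_bot, LinearMap.ker_coprod_of_disjoint_range _ _ (by simpa using hXY)]
    simp
  obtain ⟨f, hf⟩ := Module.Injective.extension_property A M _ M _ hinj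
    (X.subtype ∘ₗ LinearMap.fst A X Y)
  refine ⟨f, fun x hx => ?_, fun y hy => ?_⟩
  · simpa using LinearMap.congr_fun hf (⟨x, hx⟩, 0)
  · simpa using LinearMap.congr_fun hf (0, ⟨y, hy⟩)

theorem le_jacobson_of_isLocalRing_end [Module.Projective A M] [IsLocalRing (Module.End A M)]
    {L : Submodule A M} (hL : L ≠ ⊤) : L ≤ Module.jacobson A M := by
  refine le_sInf fun X hX => ?_
  by_contra hLX
  have hsup : L ⊔ X = ⊤ := hX.2 _ (right_lt_sup.2 hLX)
  have hsurj : Function.Surjective (X.mkQ ∘ₗ L.subtype) := by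
    rw [← LinearMap.range_eq_top, LinearMap.range_comp, Submodule.range_subtype,
      Submodule.map_mkQ_eq_top, sup_comm, hsup]
  obtain ⟨h, hh⟩ := Module.projective_lifting_property _ X.mkQ hsurj
  let a : Module.End A M := L.subtype ∘ₗ h
  have haX : ∀ x, (1 - a) x ∈ X := fun x => by
    rw [← Submodule.Quotient.mk_eq_zero, LinearMap.sub_apply, Submodule.Quotient.mk_sub]
    exact sub_eq_zero.2 (LinearMap.congr_fun hh x).symm
  rcases IsLocalRing.isUnit_or_isUnit_of_add_one (add_sub_cancel a 1) with ha | ha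
  · refine hL (eq_top_iff.2 fun y _ => ?_)
    obtain ⟨x, rfl⟩ := ((Module.End.isUnit_iff a).1 ha).2 y
    exact (h x).2
  · refine hX.1 (eq_top_iff.2 fun y _ => ?_)
    obtain ⟨x, rfl⟩ := ((Module.End.isUnit_iff (1 - a)).1 ha).2 y
    exact haX x

end Module

section Indecomposable

variable {A M N : Type} [Ring A] [AddCommGroup M] [Module A M] [AddCommGroup N] [Module A N]

namespace IsIndecomposableMod

theorem of_linearEquiv (e : M ≃ₗ[A] N) (hM : IsIndecomposableMod A M) :
    IsIndecomposableMod A N := by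
  have := hM.1
  refine ⟨e.symm.toEquiv.nontrivial, fun X Y hXY => ?_⟩
  have hcompl := hXY.map (Submodule.orderIsoMapComap e.symm)
  exact (hM.2 _ _ hcompl).imp (map_eq_bot_iff _).1 (map_eq_bot_iff _).1

theorem bijective_of_comp_eq_id [Nontrivial M] (hN : IsIndecomposableMod A N)
    {f : M →ₗ[A] N} {g : N →ₗ[A] M} (hgf : g ∘ₗ f = LinearMap.id) : Function.Bijective f := by
  have hgf_apply : ∀ x, g (f x) = x := LinearMap.congr_fun hgf
  have hidem : IsIdempotentElem (f ∘ₗ g : Module.End A N) :=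
    LinearMap.ext fun y => congrArg f (hgf_apply (g y))
  refine ⟨Function.LeftInverse.injective hgf_apply, fun y => ⟨g y, ?_⟩⟩
  rcases hN.2 _ _ (LinearMap.IsIdempotentElem.isCompl hidem) with hrange | hker
  · obtain ⟨x, hx⟩ := exists_ne (0 : M)
    have hfg : f (g (f x)) = 0 := LinearMap.congr_fun (LinearMap.range_eq_bot.1 hrange) (f x)
    exact absurd (by rw [← hgf_apply x, ← hgf_apply (g (f x)), hfg, map_zero]) hx
  · exact LinearMap.ker_eq_bot.1 hker (congrArg f (hgf_apply (g y)))

theorem bijective_of_surjective [Nontrivial N] [Module.Projective A N]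
    (hM : IsIndecomposableMod A M) {f : M →ₗ[A] N} (hf : Function.Surjective f) :
    Function.Bijective f := by
  obtain ⟨g, hfg⟩ := Module.projective_lifting_property f LinearMap.id hf
  have hg : Function.Bijective g := hM.bijective_of_comp_eq_id hfg
  refine (Function.Bijective.of_comp_iff f hg).1 ?_
  rw [← LinearMap.coe_comp, hfg]
  exact Function.bijective_id

theorem bijective_of_injective [Nontrivial M] [Module.Injective A M]
    (hN : IsIndecomposableMod A N) {f : M →ₗ[A] N} (hf : Function.Injective f) :
    Function.Bijective f := by
  obtain ⟨g, hgf⟩ := Module.Injective.extension_property A M M N f hf LinearMap.id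
  exact hN.bijective_of_comp_eq_id hgf

-- Enlarge `X` and `Y` to submodules `X'` and `Y'` each maximal among those disjoint from the other.
-- An endomorphism fixing `X'` and killing `Y'` then has range `X'`, so `X'` is a direct summand.
theorem eq_bot_or_eq_bot_of_disjoint [Module.Injective A M] (hM : IsIndecomposableMod A M)
    {X Y : Submodule A M} (hXY : Disjoint X Y) : X = ⊥ ∨ Y = ⊥ := by
  obtain ⟨Y', hYY', hY'⟩ := exists_ge_maximal_disjoint hXY
  obtain ⟨X', hXX', hX'⟩ := exists_ge_maximal_disjoint hY'.prop.symm
  obtain ⟨π, hπX, hπY⟩ := exists_end_eq_id_and_eq_zero_of_disjoint hX'.prop.symm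
  have hdisj : Disjoint Y' (LinearMap.range π) := by
    rw [Submodule.disjoint_def]
    rintro _ hy ⟨w, rfl⟩
    by_contra hw
    have hw_notMem : w ∉ Y' := fun hwY => hw (hπY w hwY)
    have hmeet : ¬ Disjoint X (Y' ⊔ Submodule.span A {w}) := fun h =>
      hw_notMem (hY'.le_of_ge h le_sup_left
        (Submodule.mem_sup_right (Submodule.mem_span_singleton_self w)))
    refine hmeet (Submodule.disjoint_def.2 fun x hx hxw => ?_)
    obtain ⟨y, hyY, z, hz, rfl⟩ := Submodule.mem_sup.1 hxw
    obtain ⟨a, rfl⟩ := Submodule.mem_span_singleton.1 hz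
    have hfix : a • π w = y + a • w := by
      rw [← hπX _ (hXX' hx), map_add, hπY y hyY, zero_add, map_smul]
    exact Submodule.disjoint_def.1 hY'.prop _ hx (hfix ▸ Y'.smul_mem a hy)
  have hrange : LinearMap.range π ≤ X' :=
    hX'.le_of_ge hdisj fun x hx => ⟨x, hπX x hx⟩
  have hcompl : IsCompl X' (LinearMap.ker (π.codRestrict X' fun x => hrange ⟨x, rfl⟩)) :=
    LinearMap.isCompl_of_proj fun x => Subtype.ext (hπX x x.2)
  refine (hM.2 _ _ hcompl).imp (fun h => eq_bot_mono hXX' h) fun h => eq_bot_mono ?_ h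
  exact fun y hy => LinearMap.mem_ker.2 (Subtype.ext (hπY y (hYY' hy)))

theorem isUnit_of_injective_of_invariant [Module.Injective A M] [Nontrivial N]
    (hM : IsIndecomposableMod A M) {ι : N →ₗ[A] M} (hι : Function.Injective ι)
    (hinv : ∀ f : Module.End A M, (LinearMap.range ι).map f ≤ LinearMap.range ι)
    {φ : Module.End A N} (hφ : Function.Injective φ) : IsUnit φ := by
  have := hM.1
  obtain ⟨F, hF⟩ := Module.Injective.extension_property A M N M ι hι (ι ∘ₗ φ)
  have hF_apply : ∀ x, F (ι x) = ι (φ x) := LinearMap.congr_fun hF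
  have hdisj : Disjoint (LinearMap.ker F) (LinearMap.range ι) := by
    rw [Submodule.disjoint_def]
    rintro _ hx ⟨x, rfl⟩
    rw [LinearMap.mem_ker, hF_apply] at hx
    rw [(map_eq_zero_iff φ hφ).1 ((map_eq_zero_iff ι hι).1 hx), map_zero]
  have hrange : LinearMap.range ι ≠ ⊥ := fun h => by
    obtain ⟨x, hx⟩ := exists_ne (0 : N)
    exact hx (hι (LinearMap.congr_fun (LinearMap.range_eq_bot.1 h) x |>.trans (map_zero ι).symm))
  have hFinj : Function.Injective F :=
    LinearMap.ker_eq_bot.1 ((hM.eq_bot_or_eq_bot_of_disjoint hdisj).resolve_right hrange)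
  let e : M ≃ₗ[A] M := LinearEquiv.ofBijective F (hM.bijective_of_injective hFinj)
  refine (Module.End.isUnit_iff φ).2 ⟨hφ, fun y => ?_⟩
  obtain ⟨x, hx⟩ := hinv e.symm ⟨ι y, ⟨y, rfl⟩, rfl⟩
  exact ⟨x, hι (by rw [← hF_apply, hx]; exact e.apply_symm_apply (ι y))⟩

theorem isLocalRing_end_of_invariant [Module.Injective A M] [Nontrivial N]
    (hM : IsIndecomposableMod A M) {ι : N →ₗ[A] M} (hι : Function.Injective ι)
    (hinv : ∀ f : Module.End A M, (LinearMap.range ι).map f ≤ LinearMap.range ι) :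
    IsLocalRing (Module.End A N) where
  isUnit_or_isUnit_of_add_one {a b} hab := by
    have hdisj : Disjoint (LinearMap.ker a) (LinearMap.ker b) := by
      refine Submodule.disjoint_def.2 fun x hax hbx => ?_
      simpa [LinearMap.mem_ker.1 hax, LinearMap.mem_ker.1 hbx] using
        (LinearMap.congr_fun hab x).symm
    refine (hM.eq_bot_or_eq_bot_of_disjoint (Submodule.disjoint_map hι hdisj)).imp ?_ ?_ <;>
      exact fun h => hM.isUnit_of_injective_of_invariant hι hinv
        (LinearMap.ker_eq_bot.1
          (Submodule.map_injective_of_injective hι (h.trans (Submodule.map_bot ι).symm)))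

end IsIndecomposableMod

end Indecomposable

section Radical

variable {A M M' : Type} [Ring A] [AddCommGroup M] [Module A M] [AddCommGroup M'] [Module A M']

theorem radSub_le (N : Submodule A M) : radSub N ≤ N :=
  Submodule.map_subtype_le _ _

theorem le_radSub_of_lt {L N : Submodule A M} [Module.Projective A N]
    [IsLocalRing (Module.End A N)] (hLN : L < N) : L ≤ radSub N := by
  have hne : L.comap N.subtype ≠ ⊤ := fun h => hLN.not_ge (Submodule.comap_subtype_eq_top.1 h)
  calc
    L = (L.comap N.subtype).map N.subtype := by
      rw [Submodule.map_comap_subtype, inf_eq_right.2 hLN.le]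
    _ ≤ radSub N := Submodule.map_mono (le_jacobson_of_isLocalRing_end hne)

theorem apply_mem_radSub {N : Submodule A M} {N' : Submodule A M'} (f : N →ₗ[A] N')
    (x : radSub N) : (f (Submodule.inclusion (radSub_le N) x) : M') ∈ radSub N' := by
  obtain ⟨_, y, hy, rfl⟩ := x
  exact ⟨f y, Module.le_comap_jacobson f hy, rfl⟩

/-- The radical as a functor: the restriction of a homomorphism `N → N'` to the radicals. -/
def radSubMap {N : Submodule A M} {N' : Submodule A M'} (f : N →ₗ[A] N') :
    radSub N →ₗ[A] radSub N' :=
  ((N'.subtype ∘ₗ f) ∘ₗ Submodule.inclusion (radSub_le N)).codRestrict _ (apply_mem_radSub f)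

theorem inclusion_radSubMap {N : Submodule A M} {N' : Submodule A M'} (f : N →ₗ[A] N')
    (x : radSub N) :
    Submodule.inclusion (radSub_le N') (radSubMap f x) =
      f (Submodule.inclusion (radSub_le N) x) :=
  rfl

theorem leftInverse_radSubMap {N : Submodule A M} {N' : Submodule A M'}
    {f : N →ₗ[A] N'} {g : N' →ₗ[A] N} (hgf : Function.LeftInverse g f) :
    Function.LeftInverse (radSubMap g) (radSubMap f) := fun x =>
  Submodule.inclusion_injective (radSub_le N) (by simp only [inclusion_radSubMap, hgf _])

theorem nonempty_radSub_linearEquiv {N : Submodule A M} {N' : Submodule A M'} (e : N ≃ₗ[A] N') :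
    Nonempty (radSub N ≃ₗ[A] radSub N') :=
  ⟨LinearEquiv.ofBijective (radSubMap e.toLinearMap)
    ⟨(leftInverse_radSubMap e.symm_apply_apply).injective,
      (leftInverse_radSubMap e.apply_symm_apply).surjective⟩⟩

theorem apply_mem_iterate_radSub {N : Submodule A M} {N' : Submodule A M'} (f : N →ₗ[A] N')
    (j : ℕ) (x : N) (hx : (x : M) ∈ radSub^[j] N) : (f x : M') ∈ radSub^[j] N' := by
  induction j generalizing N N' with
  | zero => exact (f x).2
  | succ j ih =>
    have hxrad : (x : M) ∈ radSub N :=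
      Function.antitone_iterate_of_le_id radSub_le (Nat.zero_le j) (radSub N) hx
    exact ih (radSubMap f) ⟨x, hxrad⟩ hx

end Radical

section Extension

variable {A N X : Type} [Ring A] [AddCommGroup N] [Module A N] [AddCommGroup X] [Module A X]

theorem ext1Zero_quotient_of_forall_exists_extension [Module.Projective A N] {B : Submodule A N}
    (hB : ∀ f : B →ₗ[A] X, ∃ F : N →ₗ[A] X, F ∘ₗ B.subtype = f) : Ext1Zero A (N ⧸ B) X := by
  intro E i p hi hp hip
  obtain ⟨q, hq⟩ := Module.projective_lifting_property p B.mkQ hp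
  have hqB : ∀ b : B, (q ∘ₗ B.subtype) b ∈ LinearMap.range i := fun b => by
    have hpq : p (q b) = B.mkQ b := LinearMap.congr_fun hq b
    simp [hip, hpq]
  let toRange : X ≃ₗ[A] LinearMap.range i := LinearEquiv.ofInjective i hi
  obtain ⟨F, hF⟩ := hB (toRange.symm ∘ₗ (q ∘ₗ B.subtype).codRestrict _ hqB)
  have hiF : ∀ b : B, i (F b) = q b := fun b => by
    have hFb : F b = toRange.symm ⟨q b, hqB b⟩ := LinearMap.congr_fun hF b
    rw [hFb]
    exact congrArg Subtype.val (toRange.apply_symm_apply ⟨q b, hqB b⟩)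
  have hker : B ≤ LinearMap.ker (q - i ∘ₗ F) := fun b hb =>
    sub_eq_zero.2 (hiF ⟨b, hb⟩).symm
  have hpi : p ∘ₗ i = 0 := LinearMap.range_le_ker_iff.1 hip.le
  refine ⟨B.liftQ (q - i ∘ₗ F) hker, Submodule.linearMap_qext _ ?_⟩
  rw [LinearMap.comp_assoc, Submodule.liftQ_mkQ, LinearMap.comp_sub, ← LinearMap.comp_assoc, hpi,
    LinearMap.zero_comp, sub_zero, hq, LinearMap.id_comp]

end Extension

theorem projective_rightIdeal {x : R} (hx : IsIdempotentElem x) :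
    Module.Projective Rᵐᵒᵖ (rightIdeal R x) := by
  let toIdeal : Rᵐᵒᵖ →ₗ[Rᵐᵒᵖ] rightIdeal R x :=
    (LinearMap.toSpanSingleton Rᵐᵒᵖ R x).codRestrict _ fun a =>
      Submodule.mem_span_singleton.2 ⟨a, rfl⟩
  refine Module.Projective.of_split
    ((opLinearEquiv Rᵐᵒᵖ).toLinearMap ∘ₗ (rightIdeal R x).subtype) toIdeal ?_
  ext ⟨y, hy⟩
  obtain ⟨a, rfl⟩ := Submodule.mem_span_singleton.1 hy
  change x * (x * unop a) = x * unop a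
  rw [← mul_assoc, hx.eq]

namespace HaradaData

variable (H : HaradaData R) {i u : Fin H.m}

theorem P_succ (i : Fin H.m) {j : ℕ} (hj : j + 1 < H.n i) :
    H.P i ⟨j + 1, hj⟩ = radSub (H.P i ⟨j, Nat.lt_of_succ_lt hj⟩) :=
  Function.iterate_succ_apply' _ _ _

theorem antitone_P (i : Fin H.m) : Antitone (H.P i) := fun _ _ hjk =>
  Function.antitone_iterate_of_le_id radSub_le hjk _

theorem nonempty_rightIdeal_equiv_P (i : Fin H.m) :
    ∀ j : Fin (H.n i), Nonempty (rightIdeal R (H.e i j) ≃ₗ[Rᵐᵒᵖ] H.P i j)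
  | ⟨0, _⟩ => ⟨LinearEquiv.refl _ _⟩
  | ⟨j + 1, hj⟩ => by
    obtain ⟨e⟩ := nonempty_rightIdeal_equiv_P i ⟨j, Nat.lt_of_succ_lt hj⟩
    obtain ⟨erad⟩ := nonempty_radSub_linearEquiv e
    obtain ⟨eH⟩ := H.rad_iso i ⟨j + 1, hj⟩ j.succ_pos
    exact ⟨eH.trans (erad.trans (LinearEquiv.ofEq _ _ (H.P_succ i hj).symm))⟩

instance projective_P (i : Fin H.m) (j : Fin (H.n i)) : Module.Projective Rᵐᵒᵖ (H.P i j) := by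
  obtain ⟨e⟩ := H.nonempty_rightIdeal_equiv_P i j
  have := projective_rightIdeal (H.idem i j)
  exact Module.Projective.of_equiv e

instance injective_P_zero (i : Fin H.m) : Module.Injective Rᵐᵒᵖ (H.P i ⟨0, H.hn i⟩) :=
  H.inj i

theorem isIndecomposableMod_P (i : Fin H.m) (j : Fin (H.n i)) :
    IsIndecomposableMod Rᵐᵒᵖ (H.P i j) := by
  obtain ⟨e⟩ := H.nonempty_rightIdeal_equiv_P i j
  exact (H.indec i j).of_linearEquiv e

instance nontrivial_P (i : Fin H.m) (j : Fin (H.n i)) : Nontrivial (H.P i j) :=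
  (H.isIndecomposableMod_P i j).1

instance isLocalRing_end_P (i : Fin H.m) (j : Fin (H.n i)) :
    IsLocalRing (Module.End Rᵐᵒᵖ (H.P i j)) := by
  have hle : H.P i j ≤ H.P i ⟨0, H.hn i⟩ := H.antitone_P i (Nat.zero_le j)
  refine (H.isIndecomposableMod_P i ⟨0, H.hn i⟩).isLocalRing_end_of_invariant
    (Submodule.inclusion_injective hle) fun f => ?_
  rintro _ ⟨_, ⟨x, rfl⟩, rfl⟩
  exact ⟨⟨_, apply_mem_iterate_radSub f j (Submodule.inclusion hle x) x.2⟩, rfl⟩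

variable {H}

theorem isEmpty_P_equiv (hiu : i ≠ u) (k : Fin (H.n i)) (v : Fin (H.n u)) :
    IsEmpty (H.P i k ≃ₗ[Rᵐᵒᵖ] H.P u v) := by
  obtain ⟨ei⟩ := H.nonempty_rightIdeal_equiv_P i k
  obtain ⟨eu⟩ := H.nonempty_rightIdeal_equiv_P u v
  have hne : (⟨i, k⟩ : Σ i, Fin (H.n i)) ≠ ⟨u, v⟩ := fun h => hiu (congrArg Sigma.fst h)
  exact ⟨fun e => (H.basic _ _ hne).false (ei.trans (e.trans eu.symm))⟩

theorem range_ne_P (hiu : i ≠ u) {k : Fin (H.n i)} (g : H.P i k →ₗ[Rᵐᵒᵖ] R) (v : Fin (H.n u)) :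
    LinearMap.range g ≠ H.P u v := fun h => by
  have hmem : ∀ x, g x ∈ H.P u v := fun x => h ▸ LinearMap.mem_range_self g x
  have hsurj : Function.Surjective (g.codRestrict _ hmem) := fun ⟨y, hy⟩ => by
    obtain ⟨x, hx⟩ : y ∈ LinearMap.range g := h ▸ hy
    exact ⟨x, Subtype.ext hx⟩
  exact (isEmpty_P_equiv hiu k v).false
    (LinearEquiv.ofBijective _ ((H.isIndecomposableMod_P i k).bijective_of_surjective hsurj))

theorem range_le_P (hiu : i ≠ u) {k : Fin (H.n i)} {g : H.P i k →ₗ[Rᵐᵒᵖ] R}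
    (hg : LinearMap.range g ≤ H.P u ⟨0, H.hn u⟩) :
    ∀ v : Fin (H.n u), LinearMap.range g ≤ H.P u v
  | ⟨0, _⟩ => hg
  | ⟨j + 1, hj⟩ => by
    rw [P_succ]
    exact le_radSub_of_lt ((range_le_P hiu hg ⟨j, _⟩).lt_of_ne (range_ne_P hiu g _))

theorem exists_extension_to_P (hiu : i ≠ u) {k : Fin (H.n i)} {v : Fin (H.n u)}
    {B : Submodule Rᵐᵒᵖ (H.P i k)} (f : B →ₗ[Rᵐᵒᵖ] H.P u v) :
    ∃ F : H.P i k →ₗ[Rᵐᵒᵖ] H.P u v, F ∘ₗ B.subtype = f := by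
  have hle : H.P u v ≤ H.P u ⟨0, H.hn u⟩ := H.antitone_P u (Nat.zero_le v)
  obtain ⟨g, hg⟩ := Module.Injective.extension_property Rᵐᵒᵖ (H.P u ⟨0, H.hn u⟩) B (H.P i k)
    B.subtype B.injective_subtype (Submodule.inclusion hle ∘ₗ f)
  have hrange : LinearMap.range ((H.P u ⟨0, H.hn u⟩).subtype ∘ₗ g) ≤ H.P u v :=
    range_le_P hiu (by rintro _ ⟨x, rfl⟩; exact (g x).2) v
  refine ⟨LinearMap.codRestrict _ _ fun x => hrange ⟨x, rfl⟩, ?_⟩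
  ext b
  have hgb : g b = Submodule.inclusion hle (f b) := LinearMap.congr_fun hg b
  simp [hgb]

theorem projective_comap_P {i : Fin H.m} {k l : Fin (H.n i)} (hkl : k ≤ l) :
    Module.Projective Rᵐᵒᵖ ((H.P i l).comap (H.P i k).subtype) :=
  Module.Projective.of_equiv (Submodule.comapSubtypeEquivOfLe (H.antitone_P i hkl)).symm

end HaradaData

theorem statement13_general (H : HaradaData R) {i u : Fin H.m} (hiu : i ≠ u) (k : Fin (H.n i))
    (B : Submodule Rᵐᵒᵖ (H.P i k)) (v : Fin (H.n u)) :
    Ext1Zero Rᵐᵒᵖ (H.P i k ⧸ B) (H.P u v) ∧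
      (Module.Projective Rᵐᵒᵖ B → ∀ C : Submodule Rᵐᵒᵖ (H.P u v),
        Ext1Zero Rᵐᵒᵖ (H.P i k ⧸ B) (H.P u v ⧸ C)) := by
  refine ⟨ext1Zero_quotient_of_forall_exists_extension (HaradaData.exists_extension_to_P hiu),
    fun _ C => ext1Zero_quotient_of_forall_exists_extension fun f => ?_⟩
  obtain ⟨f', hf'⟩ := Module.projective_lifting_property C.mkQ f C.mkQ_surjective
  obtain ⟨F, hF⟩ := HaradaData.exists_extension_to_P hiu f'
  exact ⟨C.mkQ ∘ₗ F, by rw [LinearMap.comp_assoc, hF, hf']⟩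

/-- Lemma 4.2.  For `i ≠ u` one has `Ext¹_R(P_{ik}/P_{il}, P_{uv}) = 0` and
`Ext¹_R(P_{ik}/P_{il}, P_{us}/P_{ut}) = 0`. -/
theorem statement13 (K R : Type) [Field K] [IsAlgClosed K] [Ring R] [Algebra K R]
    [FiniteDimensional K R] (H : HaradaData R) (i u : Fin H.m) (hiu : i ≠ u) :
    (∀ (k l : Fin (H.n i)) (v : Fin (H.n u)), k < l →
      Ext1Zero Rᵐᵒᵖ (H.Quot i k l) ↥(H.P u v)) ∧
    (∀ (k l : Fin (H.n i)) (s t : Fin (H.n u)), k < l → s < t →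
      Ext1Zero Rᵐᵒᵖ (H.Quot i k l) (H.Quot u s t)) :=
  ⟨fun k _ v _ => (statement13_general H hiu k _ v).1, fun k _ s _ hkl _ =>
    (statement13_general H hiu k _ s).2 (HaradaData.projective_comap_P hkl.le) _⟩
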